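/- arXiv:1307.2437 — 2 statements merged into one kernel-verified Lean document; each statement's English description precedes it below -/
import Mathlib

section
/- For every dimension d ≥ 1 and every constant c > 0, the set of functions {x ↦ p(x₁,…,x_d)·e^{-c|x|²} : p a complex polynomial in d variables} is dense in C₀(ℝᵈ, ℂ) with respect to the supremum norm, where |x|² = x₁² + ⋯ + x_d². -/
/-!
Let `V c` be the uniform closure in `C₀` of the functions `p(x) e^{-c|x|²}`. If `b < 2a`, expanding
`e^{(a-b)|x|²}` in powers of `|x|²` writes `p(x) e^{-b|x|²}` as a series of functions
`q(x) e^{-a|x|²}`. It converges uniformly: choosing `|a - b| < r < a`, the bound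
`(r|x|²)^m / m! ≤ e^{r|x|²}` dominates it by a geometric series. So `V b ⊆ V a`, and passing through
`3c/2` gives `V (2c) ⊆ V c`. As `V c * V c ⊆ V (2c)`, the space `V c` is an algebra, and the
Stone–Weierstrass theorem in `C₀` shows that it is everything.
-/

open MeasureTheory Filter

open scoped ZeroAtInfty Nat Topology

section StoneWeierstrass

variable {X 𝕜 : Type*} [TopologicalSpace X] [R1Space X] [RCLike 𝕜]

/-- The extension of a function vanishing at infinity by `0` to the one-point compactification. -/
def onePointExtend : C₀(X, 𝕜) →⋆ₙₐ[𝕜] C(OnePoint X, 𝕜) where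
  toFun f := OnePoint.continuousMapMk f.toContinuousMap 0
    (coclosedCompact_eq_cocompact (X := X) ▸ f.zero_at_infty')
  map_smul' r f := by ext x; cases x using OnePoint.rec <;> simp [OnePoint.continuousMapMk]
  map_zero' := by ext x; cases x using OnePoint.rec <;> simp [OnePoint.continuousMapMk]
  map_add' f g := by ext x; cases x using OnePoint.rec <;> simp [OnePoint.continuousMapMk]
  map_mul' f g := by ext x; cases x using OnePoint.rec <;> simp [OnePoint.continuousMapMk]
  map_star' f := by ext x; cases x using OnePoint.rec <;> simp [OnePoint.continuousMapMk]

@[simp]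
lemma onePointExtend_coe (f : C₀(X, 𝕜)) (x : X) : onePointExtend f (x : OnePoint X) = f x := rfl

@[simp]
lemma onePointExtend_infty (f : C₀(X, 𝕜)) : onePointExtend f OnePoint.infty = 0 := rfl

lemma isometry_onePointExtend : Isometry (onePointExtend : C₀(X, 𝕜) → C(OnePoint X, 𝕜)) := by
  refine AddMonoidHomClass.isometry_of_norm _ fun f ↦ le_antisymm ?_ ?_
  · refine (ContinuousMap.norm_le _ (norm_nonneg f)).2 fun x ↦ ?_
    cases x using OnePoint.rec with
    | infty => simp
    | coe x => exact f.toBCF.norm_coe_le_norm x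
  · exact (BoundedContinuousFunction.norm_le (norm_nonneg _)).2 fun x ↦
      (onePointExtend f).norm_coe_le_norm (x : OnePoint X)

/-- The unital star subalgebra `𝕜 + A` of `C(OnePoint X, 𝕜)`, for `A` a star subalgebra of
`C₀(X, 𝕜)`. -/
def onePointUnitization (A : NonUnitalStarSubalgebra 𝕜 C₀(X, 𝕜)) :
    StarSubalgebra 𝕜 C(OnePoint X, 𝕜) :=
  (Unitization.starLift (onePointExtend.comp (NonUnitalStarSubalgebraClass.subtype A))).range

lemma mem_onePointUnitization {A : NonUnitalStarSubalgebra 𝕜 C₀(X, 𝕜)} {F : C(OnePoint X, 𝕜)} :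
    F ∈ onePointUnitization A ↔ ∃ r : 𝕜, ∃ f ∈ A, algebraMap 𝕜 _ r + onePointExtend f = F :=
  ⟨fun ⟨u, hu⟩ ↦ ⟨u.fst, u.snd, u.snd.2, hu⟩, fun ⟨r, f, hf, h⟩ ↦
    ⟨Unitization.inl r + ((⟨f, hf⟩ : A) : Unitization 𝕜 A), by simpa using h⟩⟩

lemma onePointExtend_mem_onePointUnitization {A : NonUnitalStarSubalgebra 𝕜 C₀(X, 𝕜)}
    {f : C₀(X, 𝕜)} (hf : f ∈ A) : onePointExtend f ∈ onePointUnitization A :=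
  mem_onePointUnitization.2 ⟨0, f, hf, by simp⟩

lemma mem_image_onePointExtend_of_apply_infty_eq_zero {A : NonUnitalStarSubalgebra 𝕜 C₀(X, 𝕜)}
    {F : C(OnePoint X, 𝕜)} (hF : F ∈ onePointUnitization A) (hF0 : F OnePoint.infty = 0) :
    F ∈ onePointExtend '' (A : Set C₀(X, 𝕜)) := by
  obtain ⟨r, f, hf, rfl⟩ := mem_onePointUnitization.1 hF
  have hr : r = 0 := by simpa using hF0
  exact ⟨f, hf, by simp [hr]⟩

lemma separatesPoints_onePointUnitization {A : NonUnitalStarSubalgebra 𝕜 C₀(X, 𝕜)}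
    (hsep : Set.SeparatesPoints ((⇑) '' (A : Set C₀(X, 𝕜))))
    (hne : ∀ x, ∃ f ∈ A, f x ≠ 0) : (onePointUnitization A).SeparatesPoints := by
  intro x y hxy
  suffices ∃ f ∈ A, onePointExtend f x ≠ onePointExtend f y by
    obtain ⟨f, hf, hfxy⟩ := this
    exact ⟨_, ⟨_, onePointExtend_mem_onePointUnitization hf, rfl⟩, hfxy⟩
  cases x using OnePoint.rec with
  | infty =>
    cases y using OnePoint.rec with
    | infty => exact absurd rfl hxy
    | coe y => simpa [eq_comm] using hne y
  | coe x =>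
    cases y using OnePoint.rec with
    | infty => simpa using hne x
    | coe y => simpa using hsep (ne_of_apply_ne _ hxy)

theorem dense_of_separatesPoints_of_forall_exists_ne_zero {A : NonUnitalStarSubalgebra 𝕜 C₀(X, 𝕜)}
    (hsep : Set.SeparatesPoints ((⇑) '' (A : Set C₀(X, 𝕜))))
    (hne : ∀ x, ∃ f ∈ A, f x ≠ 0) : Dense (A : Set C₀(X, 𝕜)) := by
  let evInfty := ContinuousMap.evalStarAlgHom 𝕜 𝕜 (OnePoint.infty : OnePoint X)
  have hdense : closure (onePointUnitization A : Set C(OnePoint X, 𝕜)) = Set.univ :=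
    congrArg SetLike.coe <|
      ContinuousMap.starSubalgebra_topologicalClosure_eq_top_of_separatesPoints _
        (separatesPoints_onePointUnitization hsep hne)
  have hker : (onePointUnitization A ∩ RingHom.ker evInfty : Set C(OnePoint X, 𝕜)) ⊆
      onePointExtend '' A :=
    fun _ hF ↦ mem_image_onePointExtend_of_apply_infty_eq_zero hF.1 hF.2
  intro f
  rw [isometry_onePointExtend.isUniformInducing.isInducing.closure_eq_preimage_closure_image]
  refine closure_mono hker ?_
  rw [ContinuousMap.AlgHom.closure_ker_inter evInfty (continuous_eval_const _), hdense]
  exact ⟨Set.mem_univ _, onePointExtend_infty f⟩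

end StoneWeierstrass

lemma hasSum_apply_of_hasSum_zeroAtInfty {α β X : Type*} [TopologicalSpace X]
    [SeminormedAddCommGroup β] {f : α → C₀(X, β)} {g : C₀(X, β)} (h : HasSum f g) (x : X) :
    HasSum (fun a ↦ f a x) (g x) :=
  h.map (⟨⟨fun f ↦ f x, rfl⟩, fun _ _ ↦ rfl⟩ : C₀(X, β) →+ β) <|
    (continuous_eval_const x : Continuous fun f : BoundedContinuousFunction X β ↦ f x).comp
      ZeroAtInftyContinuousMap.isometry_toBCF.continuous

lemma tendsto_norm_pow_mul_exp_neg_mul_norm_sq_cocompact {E : Type*} [NormedAddCommGroup E]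
    [ProperSpace E] {c : ℝ} (hc : 0 < c) (n : ℕ) :
    Tendsto (fun x : E ↦ ‖x‖ ^ n * Real.exp (-c * ‖x‖ ^ 2)) (cocompact E) (𝓝 0) := by
  have h := (tendsto_rpow_abs_mul_exp_neg_mul_sq_cocompact hc n).mono_left
    (atTop_le_cocompact (α := ℝ))
  simpa [Function.comp_def] using h.comp (tendsto_norm_cocompact_atTop (E := E))

section PolyGaussian

variable {ι 𝕜 : Type*} [Fintype ι] [RCLike 𝕜]

lemma tendsto_eval_mul_exp_neg_mul_norm_sq (p : MvPolynomial ι 𝕜) {c : ℝ} (hc : 0 < c) :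
    Tendsto (fun x : EuclideanSpace ℝ ι ↦ MvPolynomial.eval (fun i ↦ (x i : 𝕜)) p *
      (Real.exp (-c * ‖x‖ ^ 2) : 𝕜)) (cocompact (EuclideanSpace ℝ ι)) (𝓝 0) := by
  induction p using MvPolynomial.induction_on generalizing c with
  | C z =>
    have hexp := (RCLike.continuous_ofReal (K := 𝕜)).tendsto' 0 0 RCLike.ofReal_zero |>.comp
      (tendsto_norm_pow_mul_exp_neg_mul_norm_sq_cocompact (E := EuclideanSpace ℝ ι) hc 0)
    simpa using hexp.const_mul z
  | add p q hp hq => simpa [add_mul] using (hp hc).add (hq hc)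
  | mul_X p i hp =>
    have hX : Tendsto (fun x : EuclideanSpace ℝ ι ↦ (x i : 𝕜) *
        (Real.exp (-(c / 2) * ‖x‖ ^ 2) : 𝕜)) (cocompact (EuclideanSpace ℝ ι)) (𝓝 0) := by
      refine squeeze_zero_norm (fun x ↦ ?_)
        (tendsto_norm_pow_mul_exp_neg_mul_norm_sq_cocompact (half_pos hc) 1)
      rw [norm_mul, RCLike.norm_ofReal, RCLike.norm_ofReal, Real.abs_exp, pow_one]
      gcongr
      exact PiLp.norm_apply_le x i
    have hsplit (x : EuclideanSpace ℝ ι) : Real.exp (-c * ‖x‖ ^ 2) =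
        Real.exp (-(c / 2) * ‖x‖ ^ 2) * Real.exp (-(c / 2) * ‖x‖ ^ 2) := by
      rw [← Real.exp_add]
      ring_nf
    simpa only [hsplit, map_mul, MvPolynomial.eval_X, RCLike.ofReal_mul, mul_mul_mul_comm,
      mul_zero] using (hp (half_pos hc)).mul hX

/-- The function `x ↦ p(x) e^{-c|x|²}` as an element of `C₀`, linear in the polynomial `p`. -/
noncomputable def polyGaussian {c : ℝ} (hc : 0 < c) :
    MvPolynomial ι 𝕜 →ₗ[𝕜] C₀(EuclideanSpace ℝ ι, 𝕜) where
  toFun p :=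
    { toFun x := MvPolynomial.eval (fun i ↦ (x i : 𝕜)) p * (Real.exp (-c * ‖x‖ ^ 2) : 𝕜)
      continuous_toFun := by
        have hp := MvPolynomial.continuous_eval p
        fun_prop
      zero_at_infty' := tendsto_eval_mul_exp_neg_mul_norm_sq p hc }
  map_add' p q := by ext x; simp [add_mul]
  map_smul' r p := by ext x; simp [mul_assoc]

lemma polyGaussian_apply {c : ℝ} (hc : 0 < c) (p : MvPolynomial ι 𝕜) (x : EuclideanSpace ℝ ι) :
    polyGaussian hc p x =
      MvPolynomial.eval (fun i ↦ (x i : 𝕜)) p * (Real.exp (-c * ‖x‖ ^ 2) : 𝕜) :=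
  rfl

lemma polyGaussian_mul_polyGaussian {a b : ℝ} (ha : 0 < a) (hb : 0 < b) (p q : MvPolynomial ι 𝕜) :
    polyGaussian ha p * polyGaussian hb q = polyGaussian (add_pos ha hb) (p * q) := by
  ext x
  simp only [ZeroAtInftyContinuousMap.mul_apply, polyGaussian_apply, neg_add, add_mul,
    Real.exp_add, map_mul]
  ring

lemma star_polyGaussian {c : ℝ} (hc : 0 < c) (p : MvPolynomial ι 𝕜) :
    star (polyGaussian hc p) = polyGaussian hc (p.map (starRingEnd 𝕜)) := by
  ext x
  have hstar : star (MvPolynomial.eval (fun i ↦ (x i : 𝕜)) p) =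
      MvPolynomial.eval (fun i ↦ (x i : 𝕜)) (p.map (starRingEnd 𝕜)) := by
    simpa [Function.comp_def] using
      (MvPolynomial.map_eval (starRingEnd 𝕜) (fun i ↦ (x i : 𝕜)) p)
  simp [polyGaussian_apply, hstar]

lemma eval_psum_two (x : EuclideanSpace ℝ ι) :
    MvPolynomial.eval (fun i ↦ (x i : 𝕜)) (MvPolynomial.psum ι 𝕜 2) = ((‖x‖ ^ 2 : ℝ) : 𝕜) := by
  simp [MvPolynomial.psum, EuclideanSpace.real_norm_sq_eq]

lemma norm_polyGaussian_psum_pow_mul_le {a r : ℝ} (hr : 0 < r) (hra : r < a) (m : ℕ)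
    (p : MvPolynomial ι 𝕜) :
    ‖polyGaussian (hr.trans hra) (MvPolynomial.psum ι 𝕜 2 ^ m * p)‖ ≤
      m ! / r ^ m * ‖polyGaussian (sub_pos.2 hra) p‖ := by
  refine (BoundedContinuousFunction.norm_le (by positivity)).2 fun x ↦ ?_
  have hexp : Real.exp (-a * ‖x‖ ^ 2) * Real.exp (r * ‖x‖ ^ 2) =
      Real.exp (-(a - r) * ‖x‖ ^ 2) := by
    rw [← Real.exp_add]
    ring_nf
  calc ‖polyGaussian (hr.trans hra) (MvPolynomial.psum ι 𝕜 2 ^ m * p) x‖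
      = (‖x‖ ^ 2) ^ m * (‖MvPolynomial.eval (fun i ↦ (x i : 𝕜)) p‖ *
          Real.exp (-a * ‖x‖ ^ 2)) := by
        simp [polyGaussian_apply, eval_psum_two, mul_assoc]
    _ = m ! / r ^ m * (‖MvPolynomial.eval (fun i ↦ (x i : 𝕜)) p‖ *
          (Real.exp (-a * ‖x‖ ^ 2) * ((r * ‖x‖ ^ 2) ^ m / m !))) := by
        rw [mul_pow]
        field_simp
    _ ≤ m ! / r ^ m * (‖MvPolynomial.eval (fun i ↦ (x i : 𝕜)) p‖ *
          (Real.exp (-a * ‖x‖ ^ 2) * Real.exp (r * ‖x‖ ^ 2))) := by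
        gcongr
        exact Real.pow_div_factorial_le_exp _ (by positivity) m
    _ = m ! / r ^ m * ‖polyGaussian (sub_pos.2 hra) p x‖ := by
        rw [hexp, polyGaussian_apply, norm_mul, RCLike.norm_ofReal, Real.abs_exp]
    _ ≤ m ! / r ^ m * ‖polyGaussian (sub_pos.2 hra) p‖ := by
        gcongr
        exact (polyGaussian (sub_pos.2 hra) p).toBCF.norm_coe_le_norm x

lemma summable_smul_polyGaussian_psum_pow_mul {a t : ℝ} (ha : 0 < a) (ht : |t| < a)
    (p : MvPolynomial ι 𝕜) :
    Summable fun m : ℕ ↦ ((t ^ m / m ! : ℝ) : 𝕜) •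
      polyGaussian ha (MvPolynomial.psum ι 𝕜 2 ^ m * p) := by
  obtain ⟨r, htr, hra⟩ := exists_between ht
  have hr : 0 < r := (abs_nonneg t).trans_lt htr
  have hgeom : Summable fun m : ℕ ↦ (|t| / r) ^ m * ‖polyGaussian (sub_pos.2 hra) p‖ :=
    (summable_geometric_of_lt_one (by positivity) ((div_lt_one hr).2 htr)).mul_right _
  refine hgeom.of_norm_bounded fun m ↦ ?_
  calc ‖((t ^ m / m ! : ℝ) : 𝕜) • polyGaussian ha (MvPolynomial.psum ι 𝕜 2 ^ m * p)‖
      = |t| ^ m / m ! * ‖polyGaussian ha (MvPolynomial.psum ι 𝕜 2 ^ m * p)‖ := by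
        rw [norm_smul, RCLike.norm_ofReal, abs_div, abs_pow, Nat.abs_cast]
    _ ≤ |t| ^ m / m ! * (m ! / r ^ m * ‖polyGaussian (sub_pos.2 hra) p‖) := by
        gcongr
        exact norm_polyGaussian_psum_pow_mul_le hr hra m p
    _ = (|t| / r) ^ m * ‖polyGaussian (sub_pos.2 hra) p‖ := by
        rw [div_pow]
        field_simp

lemma hasSum_smul_polyGaussian_psum_pow_mul_apply {a b : ℝ} (ha : 0 < a) (hb : 0 < b)
    (p : MvPolynomial ι 𝕜) (x : EuclideanSpace ℝ ι) :
    HasSum (fun m : ℕ ↦ ((((a - b) ^ m / m ! : ℝ) : 𝕜) •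
      polyGaussian ha (MvPolynomial.psum ι 𝕜 2 ^ m * p)) x) (polyGaussian hb p x) := by
  have hexp : HasSum (fun m : ℕ ↦ ((a - b) * ‖x‖ ^ 2) ^ m / m !)
      (Real.exp ((a - b) * ‖x‖ ^ 2)) := by
    simpa only [Real.exp_eq_exp_ℝ] using
      NormedSpace.expSeries_div_hasSum_exp ((a - b) * ‖x‖ ^ 2)
  have hterm (m : ℕ) : ((((a - b) ^ m / m ! : ℝ) : 𝕜) •
      polyGaussian ha (MvPolynomial.psum ι 𝕜 2 ^ m * p)) x =
        polyGaussian ha p x * ((((a - b) * ‖x‖ ^ 2) ^ m / m ! : ℝ) : 𝕜) := by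
    simp only [ZeroAtInftyContinuousMap.smul_apply, polyGaussian_apply, eval_psum_two, smul_eq_mul,
      map_mul, map_pow, map_div₀, mul_pow]
    ring
  have hsum : polyGaussian hb p x =
      polyGaussian ha p x * (Real.exp ((a - b) * ‖x‖ ^ 2) : 𝕜) := by
    rw [polyGaussian_apply, polyGaussian_apply, mul_assoc, ← RCLike.ofReal_mul, ← Real.exp_add]
    ring_nf
  rw [hsum]
  simpa only [hterm] using ((RCLike.hasSum_ofReal (𝕜 := 𝕜)).2 hexp).mul_left (polyGaussian ha p x)

lemma hasSum_smul_polyGaussian_psum_pow_mul {a b : ℝ} (ha : 0 < a) (hb : 0 < b) (hba : b < 2 * a)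
    (p : MvPolynomial ι 𝕜) :
    HasSum (fun m : ℕ ↦ (((a - b) ^ m / m ! : ℝ) : 𝕜) •
      polyGaussian ha (MvPolynomial.psum ι 𝕜 2 ^ m * p)) (polyGaussian hb p) := by
  have hab : |a - b| < a := abs_sub_lt_iff.2 ⟨by linarith, by linarith⟩
  have hs := (summable_smul_polyGaussian_psum_pow_mul ha hab p).hasSum
  have htsum : ∑' m : ℕ, (((a - b) ^ m / m ! : ℝ) : 𝕜) •
      polyGaussian ha (MvPolynomial.psum ι 𝕜 2 ^ m * p) = polyGaussian hb p :=
    ZeroAtInftyContinuousMap.ext fun x ↦ (hasSum_apply_of_hasSum_zeroAtInfty hs x).unique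
      (hasSum_smul_polyGaussian_psum_pow_mul_apply ha hb p x)
  exact htsum ▸ hs

variable (ι 𝕜) in
/-- The uniform closure in `C₀` of the functions `x ↦ p(x) e^{-c|x|²}`, `p` a polynomial. -/
noncomputable def polyGaussianClosure {c : ℝ} (hc : 0 < c) :
    Submodule 𝕜 C₀(EuclideanSpace ℝ ι, 𝕜) :=
  (polyGaussian hc).range.topologicalClosure

lemma isClosed_polyGaussianClosure {c : ℝ} (hc : 0 < c) :
    IsClosed (polyGaussianClosure ι 𝕜 hc : Set C₀(EuclideanSpace ℝ ι, 𝕜)) :=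
  Submodule.isClosed_topologicalClosure _

lemma polyGaussian_mem_polyGaussianClosure {c : ℝ} (hc : 0 < c) (p : MvPolynomial ι 𝕜) :
    polyGaussian hc p ∈ polyGaussianClosure ι 𝕜 hc :=
  Submodule.le_topologicalClosure _ ⟨p, rfl⟩

lemma polyGaussianClosure_le_of_lt_two_mul {a b : ℝ} (ha : 0 < a) (hb : 0 < b) (hba : b < 2 * a) :
    polyGaussianClosure ι 𝕜 hb ≤ polyGaussianClosure ι 𝕜 ha := by
  refine Submodule.topologicalClosure_minimal _ ?_ (isClosed_polyGaussianClosure ha)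
  rintro _ ⟨p, rfl⟩
  exact (isClosed_polyGaussianClosure ha).mem_of_tendsto
    (hasSum_smul_polyGaussian_psum_pow_mul ha hb hba p) <| .of_forall fun _ ↦
      Submodule.sum_mem _ fun _ _ ↦ Submodule.smul_mem _ _ <|
        polyGaussian_mem_polyGaussianClosure ha _

lemma polyGaussianClosure_add_self_le {c : ℝ} (hc : 0 < c) :
    polyGaussianClosure ι 𝕜 (add_pos hc hc) ≤ polyGaussianClosure ι 𝕜 hc := by
  -- `2c` itself is excluded by `b < 2a`, so go through `3c/2`.
  have hc' : 0 < 3 / 2 * c := by positivity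
  exact (polyGaussianClosure_le_of_lt_two_mul hc' _ (by linarith)).trans
    (polyGaussianClosure_le_of_lt_two_mul hc hc' (by linarith))

lemma mul_mem_polyGaussianClosure {c : ℝ} (hc : 0 < c) {f g : C₀(EuclideanSpace ℝ ι, 𝕜)}
    (hf : f ∈ polyGaussianClosure ι 𝕜 hc) (hg : g ∈ polyGaussianClosure ι 𝕜 hc) :
    f * g ∈ polyGaussianClosure ι 𝕜 hc := by
  rw [← SetLike.mem_coe, ← (isClosed_polyGaussianClosure hc).closure_eq]
  refine map_mem_closure₂ continuous_mul hf hg ?_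
  rintro _ ⟨p, rfl⟩ _ ⟨q, rfl⟩
  rw [polyGaussian_mul_polyGaussian]
  exact polyGaussianClosure_add_self_le hc (polyGaussian_mem_polyGaussianClosure _ _)

lemma star_mem_polyGaussianClosure {c : ℝ} (hc : 0 < c) {f : C₀(EuclideanSpace ℝ ι, 𝕜)}
    (hf : f ∈ polyGaussianClosure ι 𝕜 hc) : star f ∈ polyGaussianClosure ι 𝕜 hc := by
  refine map_mem_closure continuous_star hf ?_
  rintro _ ⟨p, rfl⟩
  exact ⟨_, (star_polyGaussian hc p).symm⟩

lemma polyGaussian_one_apply_ne_zero {c : ℝ} (hc : 0 < c) (x : EuclideanSpace ℝ ι) :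
    polyGaussian (𝕜 := 𝕜) hc 1 x ≠ 0 := by
  simp [polyGaussian_apply]

lemma exists_polyGaussian_apply_ne {c : ℝ} (hc : 0 < c) {x y : EuclideanSpace ℝ ι} (hxy : x ≠ y) :
    ∃ p : MvPolynomial ι 𝕜, polyGaussian hc p x ≠ polyGaussian hc p y := by
  by_contra! h
  refine hxy (PiLp.ext fun i ↦ ?_)
  have hX := h (MvPolynomial.X i)
  have hX_mul (z : EuclideanSpace ℝ ι) : polyGaussian hc (MvPolynomial.X i) z =
      (z i : 𝕜) * polyGaussian hc 1 z := by
    simp [polyGaussian_apply]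
  rw [hX_mul, hX_mul, h 1] at hX
  exact RCLike.ofReal_injective (mul_right_cancel₀ (polyGaussian_one_apply_ne_zero hc y) hX)

theorem denseRange_polyGaussian {c : ℝ} (hc : 0 < c) :
    DenseRange (polyGaussian (ι := ι) (𝕜 := 𝕜) hc) := by
  let A : NonUnitalStarSubalgebra 𝕜 C₀(EuclideanSpace ℝ ι, 𝕜) :=
    { polyGaussianClosure ι 𝕜 hc with
      mul_mem' := mul_mem_polyGaussianClosure hc
      star_mem' := star_mem_polyGaussianClosure hc }
  have hA (p) : polyGaussian hc p ∈ A := polyGaussian_mem_polyGaussianClosure hc p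
  have hdense : Dense (A : Set C₀(EuclideanSpace ℝ ι, 𝕜)) := by
    refine dense_of_separatesPoints_of_forall_exists_ne_zero (fun x y hxy ↦ ?_) fun x ↦
      ⟨_, hA 1, polyGaussian_one_apply_ne_zero hc x⟩
    obtain ⟨p, hp⟩ := exists_polyGaussian_apply_ne (𝕜 := 𝕜) hc hxy
    exact ⟨_, ⟨_, hA p, rfl⟩, hp⟩
  exact dense_closure.1 hdense

theorem stmt_0_general {c : ℝ} (hc : 0 < c) {f : EuclideanSpace ℝ ι → 𝕜} (hf : Continuous f)
    (hf0 : Tendsto f (cocompact (EuclideanSpace ℝ ι)) (𝓝 0)) {ε : ℝ} (hε : 0 < ε) :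
    ∃ q : MvPolynomial ι 𝕜, ∀ x : EuclideanSpace ℝ ι,
      ‖MvPolynomial.eval (fun i ↦ (x i : 𝕜)) q * (Real.exp (-c * ‖x‖ ^ 2) : 𝕜) - f x‖ < ε := by
  let F : C₀(EuclideanSpace ℝ ι, 𝕜) := ⟨⟨f, hf⟩, hf0⟩
  obtain ⟨q, hq⟩ := (denseRange_polyGaussian hc).exists_dist_lt F hε
  refine ⟨q, fun x ↦ ?_⟩
  rw [dist_comm, dist_eq_norm] at hq
  exact ((polyGaussian hc q - F).toBCF.norm_coe_le_norm x).trans_lt hq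

end PolyGaussian

/-- For every dimension `d ≥ 1` and constant `c > 0`, the functions
`x ↦ p(x₁,…,x_d)·e^{-c|x|²}` (`p` a complex polynomial in `d` variables) are dense in
`C₀(ℝᵈ, ℂ)` with respect to the supremum norm. -/
theorem stmt_0 (d : ℕ) (hd : 1 ≤ d) (c : ℝ) (hc : 0 < c)
    (f : EuclideanSpace ℝ (Fin d) → ℂ) (hf : Continuous f)
    (hf0 : Tendsto f (cocompact (EuclideanSpace ℝ (Fin d))) (nhds 0))
    (ε : ℝ) (hε : 0 < ε) :
    ∃ q : MvPolynomial (Fin d) ℂ, ∀ x : EuclideanSpace ℝ (Fin d),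
      ‖MvPolynomial.eval (fun i => (x i : ℂ)) q * (Real.exp (-c * ‖x‖ ^ 2) : ℂ) - f x‖ < ε :=
  stmt_0_general hc hf hf0 hε
end

section
/- Let μ be a σ-finite Borel measure on ℂ and let f : ℂ → ℂ be Borel measurable. Then there exists a sequence (pₙ) of complex polynomials in z such that pₙ(z) → f(z) for μ-almost every z ∈ ℂ. -/
open MeasureTheory Filter

/-!
On a compact set `K` with connected complement, a polynomial without zeros on `K` has its inverse
in the uniform closure `A` of the polynomials, because passing to a closed subalgebra can only fill
holes of a spectrum. If `K` misses the curve `re r = 0` for a polynomial `r`, then `A` therefore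
contains the functions `(r - 1) ^ n / ((r + 1) ^ n + (r - 1) ^ n)`, which converge uniformly to the
indicator function of `re r < 0`. On `K = C × D`, where `C` and `D` are compact sets of reals with
empty interior, these indicators separate points, so `A = C(K, ℂ)` by Stone–Weierstrass.

An s-finite measure has the null sets of a finite one, and a finite measure on `ℂ` is carried by
such grids `C × D` up to arbitrarily small mass: to find `C` and `D`, remove from large compact sets
of reals open neighbourhoods, of small mass, of dense null sets. If continuous functions `g n` tend
to `f` almost everywhere, approximate `g n` within `1 / n` on a grid that misses mass `2⁻ⁿ` and
conclude with the Borel–Cantelli lemma.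
-/

open scoped Topology ENNReal Polynomial Pointwise

section UniformLimits

variable {X : Type*} [TopologicalSpace X] [CompactSpace X]

lemma exists_lt_one_forall_min_le_mul_max {f g : X → ℝ} (hf : Continuous f) (hg : Continuous g)
    (hf₀ : 0 ≤ f) (hg₀ : 0 ≤ g) (hfg : ∀ x, f x ≠ g x) :
    ∃ ρ : ℝ, 0 ≤ ρ ∧ ρ < 1 ∧ ∀ x, min (f x) (g x) ≤ ρ * max (f x) (g x) := by
  have min_nonneg (x : X) : 0 ≤ min (f x) (g x) := le_min (hf₀ x) (hg₀ x)
  have min_lt_max (x : X) : min (f x) (g x) < max (f x) (g x) := min_lt_max.2 (hfg x)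
  have max_pos (x : X) : 0 < max (f x) (g x) := (min_nonneg x).trans_lt (min_lt_max x)
  let ratio : C(X, ℝ) :=
    ⟨fun x => min (f x) (g x) / max (f x) (g x),
      (hf.min hg).div (hf.max hg) fun x => (max_pos x).ne'⟩
  have ratio_nonneg (x : X) : 0 ≤ ratio x := div_nonneg (min_nonneg x) (max_pos x).le
  refine ⟨‖ratio‖, norm_nonneg _, (ratio.norm_lt_iff one_pos).2 fun x => ?_, fun x => ?_⟩
  · rw [Real.norm_of_nonneg (ratio_nonneg x)]
    exact (div_lt_one (max_pos x)).2 (min_lt_max x)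
  · exact (div_le_iff₀ (max_pos x)).1 ((le_abs_self _).trans (ratio.norm_coe_le_norm x))

variable {𝕜 : Type*} [NormedField 𝕜]

lemma norm_pow_div_pow_add_pow_le {a b : 𝕜} {ρ : ℝ} {n : ℕ} (hb : b ≠ 0) (hρ : ρ ^ n < 1)
    (hab : ‖a‖ ≤ ρ * ‖b‖) : ‖a ^ n / (a ^ n + b ^ n)‖ ≤ ρ ^ n / (1 - ρ ^ n) := by
  have pow_le : ‖a ^ n‖ ≤ ρ ^ n * ‖b ^ n‖ := by
    rw [norm_pow, norm_pow, ← mul_pow]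
    gcongr
  have le_denom : (1 - ρ ^ n) * ‖b ^ n‖ ≤ ‖a ^ n + b ^ n‖ := by
    have := norm_sub_le_norm_add (b ^ n) (a ^ n)
    rw [add_comm (b ^ n)] at this
    linarith
  have b_pos : 0 < ‖b ^ n‖ := norm_pos_iff.2 (pow_ne_zero n hb)
  have : 0 < 1 - ρ ^ n := sub_pos.2 hρ
  calc ‖a ^ n / (a ^ n + b ^ n)‖
      ≤ ρ ^ n * ‖b ^ n‖ / ((1 - ρ ^ n) * ‖b ^ n‖) := by
        rw [norm_div]
        gcongr
        exact (norm_nonneg _).trans pow_le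
    _ = ρ ^ n / (1 - ρ ^ n) := mul_div_mul_right _ _ b_pos.ne'

lemma pow_add_pow_ne_zero_of_norm_ne [CharZero 𝕜] {a b : 𝕜} (hab : ‖a‖ ≠ ‖b‖) (n : ℕ) :
    a ^ n + b ^ n ≠ 0 := by
  rcases eq_or_ne n 0 with rfl | hn
  · norm_num
  · intro h
    have norm_pow_eq : ‖a‖ ^ n = ‖b‖ ^ n := by
      rw [← norm_pow, ← norm_pow, eq_neg_of_add_eq_zero_left h, norm_neg]
    exact hab ((pow_left_inj₀ (norm_nonneg a) (norm_nonneg b) hn).1 norm_pow_eq)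

theorem tendstoUniformly_pow_div_pow_add_pow [CharZero 𝕜] {f g : X → 𝕜} (hf : Continuous f)
    (hg : Continuous g) (hfg : ∀ x, ‖f x‖ ≠ ‖g x‖) :
    TendstoUniformly (fun (n : ℕ) x => g x ^ n / (f x ^ n + g x ^ n))
      ({x | ‖f x‖ < ‖g x‖}.indicator 1) atTop := by
  obtain ⟨ρ, hρ₀, hρ₁, hρ⟩ := exists_lt_one_forall_min_le_mul_max hf.norm hg.norm
    (fun x => norm_nonneg (f x)) (fun x => norm_nonneg (g x)) hfg
  have pow_tendsto := tendsto_pow_atTop_nhds_zero_of_lt_one hρ₀ hρ₁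
  have bound_tendsto : Tendsto (fun n : ℕ => ρ ^ n / (1 - ρ ^ n)) atTop (𝓝 0) := by
    simpa using! pow_tendsto.div (pow_tendsto.const_sub 1) (by simp)
  rw [Metric.tendstoUniformly_iff]
  intro ε hε
  filter_upwards [bound_tendsto.eventually_lt_const hε, pow_tendsto.eventually_lt_const one_pos]
    with n hnε hn x
  refine lt_of_le_of_lt ?_ hnε
  have denom_ne := pow_add_pow_ne_zero_of_norm_ne (hfg x) n
  have hx := hρ x
  rcases lt_or_gt_of_ne (hfg x) with hlt | hgt
  · rw [min_eq_left hlt.le, max_eq_right hlt.le] at hx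
    rw [Set.indicator_of_mem (s := {x | ‖f x‖ < ‖g x‖}) hlt, Pi.one_apply, dist_eq_norm,
      one_sub_div denom_ne, add_sub_cancel_right]
    exact norm_pow_div_pow_add_pow_le (norm_pos_iff.1 ((norm_nonneg _).trans_lt hlt)) hn hx
  · rw [min_eq_right hgt.le, max_eq_left hgt.le] at hx
    rw [Set.indicator_of_notMem (s := {x | ‖f x‖ < ‖g x‖}) hgt.not_gt, dist_zero_left,
      add_comm (f x ^ n)]
    exact norm_pow_div_pow_add_pow_le (norm_pos_iff.1 ((norm_nonneg _).trans_lt hgt)) hn hx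

end UniformLimits

section UniformClosure

lemma isUnit_aeval_of_isPreconnected_compl_spectrum {B : Type*} [NormedRing B] [NormedAlgebra ℂ B]
    [CompleteSpace B] {S : Subalgebra ℂ B} (hS : IsClosed (S : Set B)) {x : S}
    (hx : IsPreconnected (spectrum ℂ (x : B))ᶜ) {p : ℂ[X]}
    (hp : IsUnit (Polynomial.aeval (x : B) p)) : IsUnit (Polynomial.aeval x p) := by
  rcases subsingleton_or_nontrivial B with _ | _
  · exact isUnit_of_subsingleton _
  · have : CompleteSpace S := hS.completeSpace_coe
    rw [← spectrum.zero_notMem_iff ℂ, spectrum.map_polynomial_aeval] at hp ⊢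
    rwa [Subalgebra.spectrum_eq_of_isPreconnected_compl S x hx]

lemma subalgebra_eq_top_of_selfAdjoint_separatesPoints {X 𝕜 : Type*} [TopologicalSpace X]
    [CompactSpace X] [RCLike 𝕜] {A : Subalgebra 𝕜 C(X, 𝕜)} (hA : IsClosed (A : Set C(X, 𝕜)))
    (hsep : ∀ x y, x ≠ y → ∃ g ∈ A, IsSelfAdjoint g ∧ g x ≠ g y) : A = ⊤ := by
  let B : StarSubalgebra 𝕜 C(X, 𝕜) :=
    { A ⊓ star A with
      star_mem' := fun {g} hg => ⟨hg.2, by simpa using! hg.1⟩ }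
  have B_separates : B.SeparatesPoints := fun x y hxy => by
    obtain ⟨g, hgA, hg, hgxy⟩ := hsep x y hxy
    exact ⟨g, ⟨g, ⟨hgA, by simpa [hg.star_eq] using hgA⟩, rfl⟩, hgxy⟩
  have B_dense := ContinuousMap.starSubalgebra_topologicalClosure_eq_top_of_separatesPoints B
    B_separates
  rw [eq_top_iff]
  intro g _
  have g_mem : g ∈ closure (B : Set C(X, 𝕜)) := by
    rw [← StarSubalgebra.topologicalClosure_coe, B_dense]
    trivial
  exact closure_minimal (fun _ h => h.1) hA g_mem

lemma toContinuousMapOn_mem_topologicalClosure {R : Type*} [CommSemiring R] [TopologicalSpace R]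
    [IsTopologicalSemiring R] {K : Set R} [IsTopologicalSemiring C(K, R)] (p : R[X]) :
    p.toContinuousMapOn K ∈ (polynomialFunctions K).topologicalClosure :=
  Subalgebra.le_topologicalClosure _ ⟨p, trivial, rfl⟩

variable {K : Set ℂ} [CompactSpace K]

theorem exists_mem_topologicalClosure_eq_inv_eval (hK : IsPreconnected Kᶜ) {p : ℂ[X]}
    (hp : ∀ z ∈ K, p.eval z ≠ 0) :
    ∃ g ∈ (polynomialFunctions K).topologicalClosure, ∀ z : K, g z = (p.eval (z : ℂ))⁻¹ := by
  let coord : (polynomialFunctions K).topologicalClosure :=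
    ⟨_, toContinuousMapOn_mem_topologicalClosure Polynomial.X⟩
  have spectrum_coord : spectrum ℂ (coord : C(K, ℂ)) = K := by
    rw [ContinuousMap.spectrum_eq_range]
    ext z
    simp [coord]
  have aeval_coord (z : K) : Polynomial.aeval (coord : C(K, ℂ)) p z = p.eval (z : ℂ) := by
    simp [coord, Polynomial.aeval_continuousMap_apply]
  have isUnit_aeval : IsUnit (Polynomial.aeval coord p) := by
    refine isUnit_aeval_of_isPreconnected_compl_spectrum
      (Subalgebra.isClosed_topologicalClosure _) (by rwa [spectrum_coord]) ?_
    rw [ContinuousMap.isUnit_iff_forall_ne_zero]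
    intro z
    rw [aeval_coord]
    exact hp z z.2
  obtain ⟨g, hg⟩ := isUnit_aeval.exists_right_inv
  refine ⟨g, g.2, fun z => eq_inv_of_mul_eq_one_right ?_⟩
  have coe_hg : Polynomial.aeval (coord : C(K, ℂ)) p * (g : C(K, ℂ)) = 1 := by
    simpa using congrArg Subtype.val hg
  rw [← aeval_coord, ← ContinuousMap.mul_apply, coe_hg, ContinuousMap.one_apply]

theorem exists_mem_topologicalClosure_eq_indicator_norm_lt (hK : IsPreconnected Kᶜ) {p q : ℂ[X]}
    (hpq : ∀ z ∈ K, ‖p.eval z‖ ≠ ‖q.eval z‖) :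
    ∃ e ∈ (polynomialFunctions K).topologicalClosure,
      ⇑e = {z : K | ‖p.eval (z : ℂ)‖ < ‖q.eval (z : ℂ)‖}.indicator 1 := by
  choose inv inv_mem inv_eq using fun n : ℕ =>
    exists_mem_topologicalClosure_eq_inv_eval hK (p := p ^ n + q ^ n) fun z hz => by
      simpa using pow_add_pow_ne_zero_of_norm_ne (hpq z hz) n
  let approx (n : ℕ) : C(K, ℂ) := (q ^ n).toContinuousMapOn K * inv n
  have approx_tendsto : TendstoUniformly (fun n => ⇑(approx n))
      ({z : K | ‖p.eval (z : ℂ)‖ < ‖q.eval (z : ℂ)‖}.indicator 1) atTop := by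
    convert tendstoUniformly_pow_div_pow_add_pow (X := K) (f := fun z => p.eval (z : ℂ))
      (g := fun z => q.eval (z : ℂ)) (by fun_prop) (by fun_prop) (fun z => hpq z z.2) using 1
    ext n z
    simp [approx, inv_eq, div_eq_mul_inv]
  let e : C(K, ℂ) :=
    ⟨_, approx_tendsto.continuous (Frequently.of_forall fun n => (approx n).continuous)⟩
  have approx_mem (n : ℕ) : approx n ∈ (polynomialFunctions K).topologicalClosure :=
    mul_mem (toContinuousMapOn_mem_topologicalClosure (q ^ n)) (inv_mem n)
  exact ⟨e, (Subalgebra.isClosed_topologicalClosure _).mem_of_tendsto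
    (ContinuousMap.tendsto_iff_tendstoUniformly.2 approx_tendsto)
    (Eventually.of_forall approx_mem), rfl⟩

section InnerProductSpace

variable {F : Type*} [NormedAddCommGroup F] [InnerProductSpace ℝ F] {x y : F}

lemma norm_add_lt_norm_sub_iff_inner_neg : ‖x + y‖ < ‖x - y‖ ↔ inner ℝ x y < 0 := by
  rw [← sq_lt_sq₀ (norm_nonneg _) (norm_nonneg _), norm_add_sq_real, norm_sub_sq_real]
  constructor <;> intro <;> linarith

lemma norm_add_eq_norm_sub_iff_inner_eq_zero : ‖x + y‖ = ‖x - y‖ ↔ inner ℝ x y = 0 := by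
  rw [← sq_eq_sq₀ (norm_nonneg _) (norm_nonneg _), norm_add_sq_real, norm_sub_sq_real]
  constructor <;> intro <;> linarith

end InnerProductSpace

theorem exists_mem_topologicalClosure_eq_indicator_re_neg (hK : IsPreconnected Kᶜ) {r : ℂ[X]}
    (hr : ∀ z ∈ K, (r.eval z).re ≠ 0) :
    ∃ e ∈ (polynomialFunctions K).topologicalClosure,
      ⇑e = {z : K | (r.eval (z : ℂ)).re < 0}.indicator 1 := by
  simpa [norm_add_lt_norm_sub_iff_inner_neg, Complex.inner] using
    exists_mem_topologicalClosure_eq_indicator_norm_lt hK (p := r + 1) (q := r - 1)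
      fun z hz => by
        simpa [norm_add_eq_norm_sub_iff_inner_eq_zero, Complex.inner] using hr z hz

theorem polynomialFunctions_topologicalClosure_eq_top_of_re_separates (hK : IsPreconnected Kᶜ)
    (hsep : ∀ z ∈ K, ∀ w ∈ K, z ≠ w → ∃ r : ℂ[X], (∀ u ∈ K, (r.eval u).re ≠ 0) ∧
      ¬((r.eval z).re < 0 ↔ (r.eval w).re < 0)) :
    (polynomialFunctions K).topologicalClosure = ⊤ := by
  refine subalgebra_eq_top_of_selfAdjoint_separatesPoints
    (Subalgebra.isClosed_topologicalClosure _) fun z w hzw => ?_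
  obtain ⟨r, hr, hrzw⟩ := hsep z z.2 w w.2 (Subtype.coe_ne_coe.2 hzw)
  obtain ⟨e, e_mem, e_eq⟩ := exists_mem_topologicalClosure_eq_indicator_re_neg hK hr
  classical
  refine ⟨e, e_mem, ?_, ?_⟩
  · ext u
    simp [e_eq, Set.indicator_apply, apply_ite (starRingEnd ℂ)]
  · simp only [e_eq, Set.indicator_apply, Set.mem_ofPred_eq, Pi.one_apply]
    grind

end UniformClosure

section Grids

lemma isPreconnected_compl_prod {X Y : Type*} [TopologicalSpace X] [TopologicalSpace Y]
    [PreconnectedSpace X] [PreconnectedSpace Y] {s : Set X} {t : Set Y} (hs : s ≠ Set.univ)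
    (ht : t ≠ Set.univ) : IsPreconnected (s ×ˢ t)ᶜ := by
  obtain ⟨a, ha⟩ := (Set.ne_univ_iff_exists_notMem s).1 hs
  obtain ⟨b, hb⟩ := (Set.ne_univ_iff_exists_notMem t).1 ht
  let cross (x : X) (y : Y) : Set (X × Y) := {x} ×ˢ Set.univ ∪ Set.univ ×ˢ {y}
  have cross_preconnected (x : X) (y : Y) : IsPreconnected (cross x y) :=
    (isPreconnected_singleton.prod isPreconnected_univ).union (x, y) (by simp) (by simp)
      (isPreconnected_univ.prod isPreconnected_singleton)
  have cross_subset {x : X} {y : Y} (hx : x ∉ s) (hy : y ∉ t) : cross x y ⊆ (s ×ˢ t)ᶜ := by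
    rintro ⟨u, v⟩ (⟨rfl, -⟩ | ⟨-, rfl⟩) h
    exacts [hx h.1, hy h.2]
  refine isPreconnected_of_forall (a, b) fun ⟨x, y⟩ hxy => ?_
  rw [Set.mem_compl_iff, Set.mem_prod, not_and_or] at hxy
  rcases hxy with hx | hy
  · exact ⟨cross x b, cross_subset hx hb, by simp [cross], by simp [cross],
      cross_preconnected x b⟩
  · exact ⟨cross a y, cross_subset ha hy, by simp [cross], by simp [cross],
      cross_preconnected a y⟩

lemma isPreconnected_compl_reProdIm {C D : Set ℝ} (hC : C ≠ Set.univ) (hD : D ≠ Set.univ) :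
    IsPreconnected (C ×ℂ D)ᶜ :=
  Complex.equivRealProdCLM.toHomeomorph.isPreconnected_preimage.2 (isPreconnected_compl_prod hC hD)

lemma exists_notMem_not_lt_iff_lt {α : Type*} [LinearOrder α] [TopologicalSpace α]
    [OrderTopology α] [DenselyOrdered α] {s : Set α} (hs : Dense sᶜ) {x y : α} (hxy : x ≠ y) :
    ∃ a ∉ s, ¬(x < a ↔ y < a) := by
  wlog hlt : x < y generalizing x y
  · obtain ⟨a, ha, hna⟩ := this hxy.symm (lt_of_le_of_ne (not_lt.1 hlt) hxy.symm)
    exact ⟨a, ha, fun h => hna h.symm⟩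
  obtain ⟨a, ha, hxa, hay⟩ := hs.exists_between hlt
  exact ⟨a, ha, fun h => (h.1 hxa).not_gt hay⟩

lemma exists_polynomial_re_separates {C D : Set ℝ} (hC : Dense Cᶜ) (hD : Dense Dᶜ) {z w : ℂ}
    (hzw : z ≠ w) :
    ∃ r : ℂ[X], (∀ u ∈ C ×ℂ D, (r.eval u).re ≠ 0) ∧
      ¬((r.eval z).re < 0 ↔ (r.eval w).re < 0) := by
  rw [Ne, Complex.ext_iff, not_and_or] at hzw
  rcases hzw with hre | him
  · obtain ⟨a, ha, hza⟩ := exists_notMem_not_lt_iff_lt hC hre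
    refine ⟨.X - .C (a : ℂ), fun u hu h => ha ?_, by simpa using hza⟩
    simpa [← sub_eq_zero.1 (by simpa using h : u.re - a = 0)] using hu.1
  · obtain ⟨a, ha, hza⟩ := exists_notMem_not_lt_iff_lt hD him
    refine ⟨.C (-Complex.I) * .X - .C (a : ℂ), fun u hu h => ha ?_, by simpa using hza⟩
    simpa [← sub_eq_zero.1 (by simpa using h : u.im - a = 0)] using hu.2

theorem polynomialFunctions_reProdIm_topologicalClosure_eq_top {C D : Set ℝ}
    [CompactSpace (C ×ℂ D)] (hC : Dense Cᶜ) (hD : Dense Dᶜ) :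
    (polynomialFunctions (C ×ℂ D)).topologicalClosure = ⊤ :=
  polynomialFunctions_topologicalClosure_eq_top_of_re_separates
    (isPreconnected_compl_reProdIm (Set.nonempty_compl.1 hC.nonempty)
      (Set.nonempty_compl.1 hD.nonempty))
    fun _ _ _ _ hzw => exists_polynomial_re_separates hC hD hzw

theorem exists_polynomial_forall_mem_reProdIm_dist_lt {C D : Set ℝ} (hC : IsCompact C)
    (hD : IsCompact D) (hC' : Dense Cᶜ) (hD' : Dense Dᶜ) (g : C(ℂ, ℂ)) {ε : ℝ} (hε : 0 < ε) :
    ∃ p : ℂ[X], ∀ z ∈ C ×ℂ D, dist (g z) (p.eval z) < ε := by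
  have : CompactSpace (C ×ℂ D) := isCompact_iff_compactSpace.1 (hC.reProdIm hD)
  have g_mem : g.restrict (C ×ℂ D) ∈
      closure (polynomialFunctions (C ×ℂ D) : Set C(C ×ℂ D, ℂ)) := by
    rw [← Subalgebra.topologicalClosure_coe,
      polynomialFunctions_reProdIm_topologicalClosure_eq_top hC' hD']
    trivial
  obtain ⟨_, ⟨p, -, rfl⟩, hp⟩ := Metric.mem_closure_iff.1 g_mem ε hε
  exact ⟨p, fun z hz => (ContinuousMap.dist_lt_iff hε).1 hp ⟨z, hz⟩⟩

end Grids

section AlmostEverywhere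

lemma exists_dense_measure_eq_zero {E : Type*} [AddCommGroup E] [Module ℝ E] [Nontrivial E]
    [TopologicalSpace E] [ContinuousAdd E] [ContinuousSMul ℝ E] [SecondCountableTopology E]
    [MeasurableSpace E] [MeasurableSingletonClass E] (ν : Measure E) [SFinite ν] :
    ∃ s : Set E, Dense s ∧ ν s = 0 := by
  have atoms_countable : {x : E | 0 < ν {x}}.Countable := by
    simpa using! Measure.countable_meas_level_set_pos (μ := ν) measurable_id
  obtain ⟨s, hs, s_countable, s_dense⟩ :=
    (atoms_countable.dense_compl ℝ).exists_countable_dense_subset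
  exact ⟨s, s_dense, (measure_null_iff_singleton s_countable).2 fun x hx => by simpa using hs hx⟩

lemma exists_isCompact_dense_compl_measure_compl_le {X : Type*} [TopologicalSpace X] [T2Space X]
    [MeasurableSpace X] [OpensMeasurableSpace X] {ν : Measure X} [IsFiniteMeasure ν]
    [ν.OuterRegular] [ν.InnerRegularCompactLTTop] {s : Set X} (hs : Dense s) (hνs : ν s = 0)
    {ε : ℝ≥0∞} (hε : ε ≠ 0) :
    ∃ C : Set X, IsCompact C ∧ Dense Cᶜ ∧ ν Cᶜ ≤ ε := by
  have half_ne : ε / 2 ≠ 0 := (ENNReal.half_pos hε).ne'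
  obtain ⟨U, sU, U_open, hU⟩ := s.exists_isOpen_lt_of_lt (μ := ν) (ε / 2)
    (hνs.trans_lt (pos_iff_ne_zero.2 half_ne))
  obtain ⟨K, -, K_compact, hK⟩ := MeasurableSet.univ.exists_isCompact_sdiff_lt (μ := ν)
    (measure_ne_top _ _) half_ne
  refine ⟨K \ U, K_compact.diff U_open, hs.mono fun x hx h => h.2 (sU hx), ?_⟩
  calc ν (K \ U)ᶜ = ν ((Set.univ \ K) ∪ U) := by
        rw [Set.sdiff_eq, Set.compl_inter, compl_compl, Set.compl_eq_univ_sdiff]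
    _ ≤ ν (Set.univ \ K) + ν U := measure_union_le _ _
    _ ≤ ε / 2 + ε / 2 := add_le_add hK.le hU.le
    _ = ε := ENNReal.add_halves ε

theorem exists_reProdIm_measure_compl_le (ν : Measure ℂ) [IsFiniteMeasure ν] {ε : ℝ≥0∞}
    (hε : ε ≠ 0) :
    ∃ C D : Set ℝ, IsCompact C ∧ IsCompact D ∧ Dense Cᶜ ∧ Dense Dᶜ ∧ ν (C ×ℂ D)ᶜ ≤ ε := by
  have exists_marginal (ν' : Measure ℝ) [IsFiniteMeasure ν'] :
      ∃ C : Set ℝ, IsCompact C ∧ Dense Cᶜ ∧ ν' Cᶜ ≤ ε / 2 := by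
    obtain ⟨s, hs, hνs⟩ := exists_dense_measure_eq_zero ν'
    exact exists_isCompact_dense_compl_measure_compl_le hs hνs (ENNReal.half_pos hε).ne'
  obtain ⟨C, hC, hC', hνC⟩ := exists_marginal (ν.map Complex.re)
  obtain ⟨D, hD, hD', hνD⟩ := exists_marginal (ν.map Complex.im)
  rw [Measure.map_apply Complex.measurable_re hC.measurableSet.compl] at hνC
  rw [Measure.map_apply Complex.measurable_im hD.measurableSet.compl] at hνD
  refine ⟨C, D, hC, hD, hC', hD', ?_⟩
  calc ν (C ×ℂ D)ᶜ = ν (Complex.re ⁻¹' Cᶜ ∪ Complex.im ⁻¹' Dᶜ) := by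
        rw [Complex.reProdIm, Set.compl_inter, Set.preimage_compl, Set.preimage_compl]
    _ ≤ ν (Complex.re ⁻¹' Cᶜ) + ν (Complex.im ⁻¹' Dᶜ) := measure_union_le _ _
    _ ≤ ε / 2 + ε / 2 := add_le_add hνC hνD
    _ = ε := ENNReal.add_halves ε

variable {α E : Type*} [MeasurableSpace α] [NormedAddCommGroup E] [NormedSpace ℝ E]
  {μ : Measure α} [SFinite μ] {f : α → E}

lemma exists_isFiniteMeasure_absolutelyContinuous_integrable (hf : AEStronglyMeasurable f μ) :
    ∃ ν : Measure α, IsFiniteMeasure ν ∧ μ ≪ ν ∧ Integrable f ν := by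
  have hf' : AEStronglyMeasurable f μ.toFinite := hf.mono_ac (toFinite_absolutelyContinuous μ)
  let weight (x : α) : NNReal := (1 + ‖f x‖₊)⁻¹
  have weight_le_one (x : α) : weight x ≤ 1 := inv_le_one_of_one_le₀ le_self_add
  have weight_mul_le_one (x : α) : weight x * ‖f x‖₊ ≤ 1 :=
    inv_mul_le_one_of_le₀ le_add_self zero_le
  have weight_ne_zero (x : α) : weight x ≠ 0 := inv_ne_zero (by positivity)
  have weight_measurable : AEMeasurable weight μ.toFinite :=
    (aemeasurable_const.add hf'.nnnorm.aemeasurable).inv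
  refine ⟨μ.toFinite.withDensity fun x => weight x, isFiniteMeasure_withDensity ?_, ?_, ?_⟩
  · refine ((lintegral_mono fun x => ENNReal.coe_le_one_iff.2 (weight_le_one x)).trans_lt ?_).ne
    simp
  · exact (absolutelyContinuous_toFinite μ).trans (withDensity_absolutelyContinuous'
      weight_measurable.coe_nnreal_ennreal (ae_of_all _ fun x => by simp [weight_ne_zero x]))
  · rw [integrable_withDensity_iff_integrable_smul₀ weight_measurable]
    refine .of_bound (weight_measurable.aestronglyMeasurable.smul hf') 1
      (ae_of_all _ fun x => ?_)
    rw [NNReal.smul_def, norm_smul, Real.norm_of_nonneg (weight x).coe_nonneg]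
    exact_mod_cast weight_mul_le_one x

theorem exists_continuousMap_seq_tendsto_ae [TopologicalSpace α]
    [TopologicalSpace.PseudoMetrizableSpace α] [BorelSpace α] (hf : AEStronglyMeasurable f μ) :
    ∃ g : ℕ → C(α, E), ∀ᵐ x ∂μ, Tendsto (fun n => g n x) atTop (𝓝 (f x)) := by
  obtain ⟨ν, _, μ_ac, f_int⟩ := exists_isFiniteMeasure_absolutelyContinuous_integrable hf
  let := TopologicalSpace.pseudoMetrizableSpacePseudoMetric α
  choose g g_le g_memLp using fun n : ℕ =>
    (memLp_one_iff_integrable.2 f_int).exists_boundedContinuous_eLpNorm_sub_le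
      ENNReal.one_ne_top (ε := (n : ℝ≥0∞)⁻¹) (by simp)
  have g_tendsto : TendstoInMeasure ν (fun n => ⇑(g n)) atTop f := by
    refine tendstoInMeasure_of_tendsto_eLpNorm one_ne_zero (fun n => (g_memLp n).1) f_int.1 ?_
    refine tendsto_of_tendsto_of_tendsto_of_le_of_le tendsto_const_nhds
      ENNReal.tendsto_inv_nat_nhds_zero (fun _ => zero_le) fun n => ?_
    exact (eLpNorm_sub_comm _ _ _ _).trans_le (g_le n)
  obtain ⟨ns, -, h⟩ := g_tendsto.exists_seq_tendsto_ae
  exact ⟨fun n => (g (ns n)).toContinuousMap, μ_ac.ae_le h⟩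

end AlmostEverywhere

theorem stmt_9_general (μ : Measure ℂ) [SFinite μ] (f : ℂ → ℂ) (hf : AEMeasurable f μ) :
    ∃ P : ℕ → ℂ[X], ∀ᵐ z ∂μ, Tendsto (fun n => (P n).eval z) atTop (𝓝 (f z)) := by
  obtain ⟨g, hg⟩ := exists_continuousMap_seq_tendsto_ae hf.aestronglyMeasurable
  choose C D hC hD hC' hD' hCD using fun n : ℕ =>
    exists_reProdIm_measure_compl_le μ.toFinite (ε := 2⁻¹ ^ n) (by simp)
  choose P hP using fun n : ℕ => exists_polynomial_forall_mem_reProdIm_dist_lt (hC n) (hD n)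
    (hC' n) (hD' n) (g n) (Nat.one_div_pos_of_nat (α := ℝ) (n := n))
  have ae_mem_grid : ∀ᵐ z ∂μ, ∀ᶠ n in atTop, z ∈ C n ×ℂ D n := by
    have sum_ne_top : ∑' n, μ.toFinite (C n ×ℂ D n)ᶜ ≠ ∞ :=
      ne_top_of_le_ne_top (by simp) (ENNReal.tsum_le_tsum hCD)
    simpa [ae_toFinite] using ae_eventually_notMem sum_ne_top
  refine ⟨P, ?_⟩
  filter_upwards [hg, ae_mem_grid] with z g_tendsto z_mem
  refine g_tendsto.congr_dist (squeeze_zero' (Eventually.of_forall fun _ => dist_nonneg)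
    (z_mem.mono fun n hn => (hP n z hn).le) tendsto_one_div_add_atTop_nhds_zero_nat)

/-- For a σ-finite Borel measure `μ` on `ℂ` and a Borel measurable `f : ℂ → ℂ` there is a
sequence of polynomials in `z` converging to `f` μ-almost everywhere. -/
theorem stmt_9 (μ : Measure ℂ) [SigmaFinite μ] (f : ℂ → ℂ) (hf : Measurable f) :
    ∃ P : ℕ → Polynomial ℂ,
      ∀ᵐ z ∂μ, Tendsto (fun n => Polynomial.eval z (P n)) atTop (nhds (f z)) :=
  stmt_9_general μ f hf.aemeasurable
end
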